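/- Consider an AE metric on ℝ^n \ B̄_1(0) of class W^{k,q}_{−τ}, q>n, k≥1, with τ* = min{τ, n−2}, and let v ∈ W^{2,q}_{1−τ*} solve Δ_g v = Γ where Γ = g^{kl}Γ^i_{kl} ∈ W^{k-1,q}_{−1−τ}. Setting y = x − v, then dy = Id + O(|x|^{−τ*}) pointwise; in particular there exists R>0 such that y defines a diffeomorphism from a neighbourhood of infinity onto the exterior of a ball, and C^{−1}|x| ≤ |y(x)| ≤ C|x| for some C>0. -/

import Mathlib

open MeasureTheory Finset ENNReal
noncomputable section

/-- Euclidean space ℝⁿ. -/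
abbrev Eu (n : ℕ) := EuclideanSpace ℝ (Fin n)

/-- The weight function σ(x) = √(1+|x|²). -/
def sg {n : ℕ} (x : Eu n) : ℝ := Real.sqrt (1 + ‖x‖^2)

/-- The exterior region {x : R < |x|}. -/
def ext (n : ℕ) (R : ℝ) : Set (Eu n) := {x | R < ‖x‖}

/-- Weighted Sobolev norm ‖u‖_{W^{k,p}_δ} on the exterior region. -/
def wnorm (n k : ℕ) (p δ R : ℝ) {F : Type} [NormedAddCommGroup F] [NormedSpace ℝ F]
    (u : Eu n → F) : ℝ≥0∞ :=
  ∑ j ∈ Finset.range (k+1),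
    (∫⁻ x in ext n R,
      ENNReal.ofReal (‖iteratedFDerivWithin ℝ j u (ext n R) x‖ ^ p
        * sg x ^ (((j : ℝ) - δ) * p - n))) ^ (1/p : ℝ)

/-- Membership in the weighted Sobolev space W^{k,p}_δ on the exterior region. -/
def memW (n k : ℕ) (p δ R : ℝ) {F : Type} [NormedAddCommGroup F] [NormedSpace ℝ F]
    (u : Eu n → F) : Prop :=
  ContDiffOn ℝ k u (ext n R) ∧ wnorm n k p δ R u < ⊤

/-- Partial derivative ∂ᵢf of a scalar field. -/
def pd {n : ℕ} (i : Fin n) (f : Eu n → ℝ) (x : Eu n) : ℝ :=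
  fderiv ℝ f x (EuclideanSpace.single i 1)

/-- Christoffel symbols Γᵏᵢⱼ = (1/2)gᵏˡ(∂ᵢg_{lj} + ∂ⱼg_{li} − ∂_l g_{ij}). -/
def chris {n : ℕ} (g ginv : Eu n → Matrix (Fin n) (Fin n) ℝ)
    (k i j : Fin n) (x : Eu n) : ℝ :=
  (1/2) * ∑ l, ginv x k l *
    (pd i (fun y => g y l j) x + pd j (fun y => g y l i) x - pd l (fun y => g y i j) x)

/-- Laplace-Beltrami operator on scalars: Δ_g f = gᵃᵇ(∂_a∂_b f − Γᶜ_{ab}∂_c f). -/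
def lapB {n : ℕ} (g ginv : Eu n → Matrix (Fin n) (Fin n) ℝ)
    (f : Eu n → ℝ) (x : Eu n) : ℝ :=
  ∑ a, ∑ b, ginv x a b * (pd a (pd b f) x - ∑ c, chris g ginv c a b x * pd c f x)

/-- Contracted Christoffel symbols Γⁱ = gᵏˡΓⁱ_{kl}. -/
def gam {n : ℕ} (g ginv : Eu n → Matrix (Fin n) (Fin n) ℝ)
    (i : Fin n) (x : Eu n) : ℝ :=
  ∑ k, ∑ l, ginv x k l * chris g ginv i k l x

/-- Hölder's inequality against the constant function `1`. -/
lemma lintegral_le_rpow_mul_measure_univ {α : Type*} [MeasurableSpace α] (μ : Measure α)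
    {q : ℝ} (hq : 1 < q) {g : α → ℝ≥0∞} (hg : AEMeasurable g μ) :
    ∫⁻ a, g a ∂μ ≤ (∫⁻ a, g a ^ q ∂μ) ^ (1 / q) * μ Set.univ ^ (1 - 1 / q) := by
  have hc := Real.HolderConjugate.conjExponent hq
  have h := ENNReal.lintegral_mul_le_Lp_mul_Lq μ hc hg (aemeasurable_const (b := (1 : ℝ≥0∞)))
  have he : 1 / q.conjExponent = 1 - 1 / q := by
    have := hc.inv_add_inv_eq_one
    simp only [one_div]; linarith
  simpa [he] using h

/-- Integrals over balls centred at `x`, translated to the origin. -/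
lemma setLIntegral_ball_zero_add {E : Type*} [NormedAddCommGroup E] [MeasurableSpace E]
    [BorelSpace E] (μ : Measure E) [μ.IsAddLeftInvariant] (x : E) (r : ℝ) (φ : E → ℝ≥0∞) :
    ∫⁻ y in Metric.ball (0 : E) r, φ (x + y) ∂μ = ∫⁻ z in Metric.ball x r, φ z ∂μ := by
  rw [← lintegral_indicator measurableSet_ball, ← lintegral_indicator measurableSet_ball,
    ← lintegral_add_left_eq_self ((Metric.ball x r).indicator φ) x]
  congr 1 with y
  simp [Set.indicator]

section Morrey

variable {E F : Type*} [NormedAddCommGroup E] [NormedSpace ℝ E] [NormedAddCommGroup F]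
  [NormedSpace ℝ F]

/-- The fundamental theorem of calculus along a segment issuing from the centre of a ball. -/
lemma enorm_center_le_add_lintegral_fderiv {f : E → F} {x : E} {r : ℝ}
    (hf : ContDiffOn ℝ 1 f (Metric.ball x r)) {y : E} (hy : y ∈ Metric.ball (0 : E) r) :
    ‖f x‖ₑ ≤ ‖f (x + y)‖ₑ +
      ENNReal.ofReal r * ∫⁻ t in Set.Ioo (0 : ℝ) 1, ‖fderiv ℝ f (x + t • y)‖ₑ := by
  have hy' : ‖y‖ < r := by simpa using hy
  have hmem : ∀ t ∈ Set.Icc (0 : ℝ) 1, x + t • y ∈ Metric.ball x r := by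
    intro t ht
    have : |t| * ‖y‖ ≤ 1 * ‖y‖ := by
      gcongr; rw [abs_of_nonneg ht.1]; exact ht.2
    simp only [Metric.mem_ball, dist_self_add_left, norm_smul, Real.norm_eq_abs]
    linarith
  have hc : ContDiffOn ℝ 1 (fun t : ℝ => f (x + t • y)) (Set.Icc 0 1) :=
    hf.comp (by fun_prop) hmem
  have h1 := enorm_sub_le_lintegral_deriv_of_contDiffOn_Icc hc zero_le_one
  have h2 : ∫⁻ t in Set.Icc (0 : ℝ) 1, ‖deriv (fun t : ℝ => f (x + t • y)) t‖ₑ ≤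
      ENNReal.ofReal r * ∫⁻ t in Set.Ioo (0 : ℝ) 1, ‖fderiv ℝ f (x + t • y)‖ₑ := by
    rw [← restrict_Ioo_eq_restrict_Icc, ← lintegral_const_mul' _ _ ENNReal.ofReal_ne_top]
    refine setLIntegral_mono' measurableSet_Ioo fun t ht => ?_
    have hd : DifferentiableAt ℝ f (x + t • y) :=
      (hf.contDiffAt (Metric.isOpen_ball.mem_nhds
        (hmem t (Set.Ioo_subset_Icc_self ht)))).differentiableAt one_ne_zero
    have hl : HasDerivAt (fun t : ℝ => x + t • y) y t := by
      simpa using ((hasDerivAt_id t).smul_const y).const_add x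
    have hcomp : HasDerivAt (fun t : ℝ => f (x + t • y)) (fderiv ℝ f (x + t • y) y) t :=
      hd.hasFDerivAt.comp_hasDerivAt t hl
    rw [hcomp.deriv]
    calc ‖fderiv ℝ f (x + t • y) y‖ₑ ≤ ‖fderiv ℝ f (x + t • y)‖ₑ * ‖y‖ₑ :=
          ContinuousLinearMap.le_opENorm _ _
      _ ≤ ‖fderiv ℝ f (x + t • y)‖ₑ * ENNReal.ofReal r := by
          gcongr
          rw [← ofReal_norm]
          exact ENNReal.ofReal_le_ofReal hy'.le
      _ = _ := mul_comm _ _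
  simp only [one_smul, zero_smul, add_zero] at h1
  calc ‖f x‖ₑ = ‖f (x + y) - (f (x + y) - f x)‖ₑ := by simp
    _ ≤ ‖f (x + y)‖ₑ + ‖f (x + y) - f x‖ₑ := enorm_sub_le
    _ ≤ _ := by gcongr; exact h1.trans h2

variable [MeasurableSpace E] [BorelSpace E] [FiniteDimensional ℝ E]
  (μ : Measure E) [μ.IsAddHaarMeasure]

/-- Contracting a ball towards its centre by the factor `t` costs at most `t⁻ᵈ`. -/
lemma setLIntegral_ball_zero_add_smul_le (x : E) {r t : ℝ} (ht : t ∈ Set.Ioo (0 : ℝ) 1)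
    {φ : E → ℝ≥0∞} (hφ : Measurable φ) :
    ∫⁻ y in Metric.ball (0 : E) r, φ (x + t • y) ∂μ ≤
      ENNReal.ofReal (t ^ (-(Module.finrank ℝ E : ℝ))) * ∫⁻ z in Metric.ball x r, φ z ∂μ := by
  let ψ : E → ℝ≥0∞ := (Metric.ball (0 : E) r).indicator fun z => φ (x + z)
  have hψ : Measurable ψ := (hφ.comp (measurable_const_add x)).indicator measurableSet_ball
  have h0 : ENNReal.ofReal |(t ^ Module.finrank ℝ E)⁻¹| =
      ENNReal.ofReal (t ^ (-(Module.finrank ℝ E : ℝ))) := by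
    rw [Real.rpow_neg ht.1.le, Real.rpow_natCast, abs_of_pos (inv_pos.2 (pow_pos ht.1 _))]
  calc ∫⁻ y in Metric.ball (0 : E) r, φ (x + t • y) ∂μ
      ≤ ∫⁻ y, ψ (t • y) ∂μ := by
        rw [← lintegral_indicator measurableSet_ball]
        refine lintegral_mono fun y => ?_
        by_cases hy : y ∈ Metric.ball (0 : E) r
        · have hty : t • y ∈ Metric.ball (0 : E) r := by
            rw [mem_ball_zero_iff] at hy ⊢
            rw [norm_smul, Real.norm_of_nonneg ht.1.le]
            nlinarith [ht.1, ht.2, norm_nonneg y]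
          simp [ψ, hy, hty]
        · simp [hy]
    _ = ∫⁻ z, ψ z ∂(Measure.map (fun y => t • y) μ) :=
        (lintegral_map hψ (measurable_const_smul t)).symm
    _ = _ := by
        rw [Measure.map_addHaar_smul μ ht.1.ne', lintegral_smul_measure, h0, smul_eq_mul,
          lintegral_indicator measurableSet_ball, setLIntegral_ball_zero_add]

/-- **Morrey's inequality** on a ball, evaluated at the centre. -/
lemma morrey_center [CompleteSpace F] {q : ℝ} (hq1 : 1 < q)
    {f : E → F} {x : E} {r : ℝ} (hr : 0 < r)
    (hf : ContDiffOn ℝ 1 f (Metric.ball x r)) :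
    ‖f x‖ₑ * μ (Metric.ball x r) ^ (1 / q) ≤
      (∫⁻ z in Metric.ball x r, ‖f z‖ₑ ^ q ∂μ) ^ (1 / q) +
      ENNReal.ofReal r *
        (∫⁻ t in Set.Ioo (0 : ℝ) 1, ENNReal.ofReal (t ^ (-(Module.finrank ℝ E : ℝ) / q))) *
        (∫⁻ z in Metric.ball x r, ‖fderiv ℝ f z‖ₑ ^ q ∂μ) ^ (1 / q) := by
  have hq0 : 0 < q := one_pos.trans hq1
  set B := Metric.ball (0 : E) r
  set V := μ (Metric.ball x r)
  have hVB : μ.restrict B Set.univ = V := by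
    simp only [Measure.restrict_apply_univ, B, V, Measure.addHaar_ball_center μ x r]
  have hV0 : V ≠ 0 := (Metric.measure_ball_pos μ x hr).ne'
  have hVtop : V ≠ ⊤ := measure_ball_lt_top.ne
  set A := ∫⁻ z in Metric.ball x r, ‖f z‖ₑ ^ q ∂μ
  set D := ∫⁻ z in Metric.ball x r, ‖fderiv ℝ f z‖ₑ ^ q ∂μ
  set C := ∫⁻ t in Set.Ioo (0 : ℝ) 1, ENNReal.ofReal (t ^ (-(Module.finrank ℝ E : ℝ) / q))
  have hdm : Measurable fun z => ‖fderiv ℝ f z‖ₑ := (measurable_fderiv ℝ f).enorm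
  have hunc : Measurable (Function.uncurry fun (y : E) (t : ℝ) => ‖fderiv ℝ f (x + t • y)‖ₑ) :=
    hdm.comp (by fun_prop)
  have hfm : AEMeasurable (fun y => ‖f (x + y)‖ₑ) (μ.restrict B) := by
    have : ContinuousOn (fun y => f (x + y)) B := by
      refine hf.continuousOn.comp (by fun_prop) fun y hy => ?_
      simpa [B] using hy
    exact (this.enorm).aemeasurable measurableSet_ball
  have hA : ∫⁻ y in B, ‖f (x + y)‖ₑ ∂μ ≤ A ^ (1 / q) * V ^ (1 - 1 / q) := by
    have := lintegral_le_rpow_mul_measure_univ _ hq1 hfm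
    rwa [hVB, setLIntegral_ball_zero_add μ x r fun z => ‖f z‖ₑ ^ q] at this
  have hD : ∀ t ∈ Set.Ioo (0 : ℝ) 1, ∫⁻ y in B, ‖fderiv ℝ f (x + t • y)‖ₑ ∂μ ≤
      ENNReal.ofReal (t ^ (-(Module.finrank ℝ E : ℝ) / q)) *
        (D ^ (1 / q) * V ^ (1 - 1 / q)) := by
    intro t ht
    have h1 := lintegral_le_rpow_mul_measure_univ (μ.restrict B) hq1
      (g := fun y => ‖fderiv ℝ f (x + t • y)‖ₑ) (hdm.comp (by fun_prop)).aemeasurable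
    rw [hVB] at h1
    have h2 := setLIntegral_ball_zero_add_smul_le μ x (r := r) ht (hdm.pow_const q)
    have h3 : ENNReal.ofReal (t ^ (-(Module.finrank ℝ E : ℝ) / q)) =
        ENNReal.ofReal (t ^ (-(Module.finrank ℝ E : ℝ))) ^ (1 / q) := by
      rw [ENNReal.ofReal_rpow_of_pos (Real.rpow_pos_of_pos ht.1 _), ← Real.rpow_mul ht.1.le,
        mul_one_div]
    refine h1.trans ?_
    rw [h3, ← mul_assoc, ← ENNReal.mul_rpow_of_nonneg _ _ (by positivity)]
    gcongr
  have hmain : ‖f x‖ₑ * V ≤ (A ^ (1 / q) + ENNReal.ofReal r * C * D ^ (1 / q)) *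
      V ^ (1 - 1 / q) := by
    calc ‖f x‖ₑ * V = ∫⁻ _ in B, ‖f x‖ₑ ∂μ := by rw [lintegral_const, hVB]
      _ ≤ ∫⁻ y in B, (‖f (x + y)‖ₑ +
          ENNReal.ofReal r * ∫⁻ t in Set.Ioo (0 : ℝ) 1, ‖fderiv ℝ f (x + t • y)‖ₑ) ∂μ :=
        setLIntegral_mono' measurableSet_ball fun y hy =>
          enorm_center_le_add_lintegral_fderiv hf hy
      _ = ∫⁻ y in B, ‖f (x + y)‖ₑ ∂μ + ENNReal.ofReal r *
          ∫⁻ t in Set.Ioo (0 : ℝ) 1, ∫⁻ y in B, ‖fderiv ℝ f (x + t • y)‖ₑ ∂μ := by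
        rw [lintegral_add_left' hfm, lintegral_const_mul' _ _ ENNReal.ofReal_ne_top,
          lintegral_lintegral_swap hunc.aemeasurable]
      _ ≤ A ^ (1 / q) * V ^ (1 - 1 / q) +
          ENNReal.ofReal r * (C * (D ^ (1 / q) * V ^ (1 - 1 / q))) := by
        gcongr
        rw [← lintegral_mul_const _ (by fun_prop)]
        exact setLIntegral_mono' measurableSet_Ioo hD
      _ = _ := by ring
  have hsplit : V = V ^ (1 / q) * V ^ (1 - 1 / q) := by
    rw [← ENNReal.rpow_add _ _ hV0 hVtop]; simp
  have hp0 : V ^ (1 - 1 / q) ≠ 0 := by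
    simp [ENNReal.rpow_eq_zero_iff, hV0, hVtop]
  have hptop : V ^ (1 - 1 / q) ≠ ⊤ := by
    simp [ENNReal.rpow_eq_top_iff, hV0, hVtop]
  rw [← ENNReal.mul_le_mul_iff_left hp0 hptop, mul_assoc, ← hsplit]
  exact hmain

end Morrey

section Decay

variable {n : ℕ}

lemma isOpen_ext (R : ℝ) : IsOpen (ext n R) := isOpen_lt continuous_const continuous_norm

lemma tendsto_setLIntegral_ext_atTop {R0 : ℝ} {w : Eu n → ℝ≥0∞}
    (hw : ∫⁻ x in ext n R0, w x < ⊤) :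
    Filter.Tendsto (fun ρ => ∫⁻ x in ext n ρ, w x) Filter.atTop (nhds 0) := by
  have hanti : Antitone (ext n) := fun a b hab x (hx : b < ‖x‖) => hab.trans_lt hx
  have hi : ⋂ ρ, ext n ρ = ∅ := by
    refine Set.eq_empty_of_forall_notMem fun x hx => ?_
    have : ‖x‖ < ‖x‖ := Set.mem_iInter.1 hx ‖x‖
    exact this.false
  have happ : ∀ ρ, volume.withDensity w (ext n ρ) = ∫⁻ x in ext n ρ, w x := fun ρ =>
    withDensity_apply _ (isOpen_ext ρ).measurableSet
  have h := tendsto_measure_iInter_atTop (μ := volume.withDensity w) (s := ext n)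
    (fun ρ => (isOpen_ext ρ).measurableSet.nullMeasurableSet) hanti ⟨R0, by rw [happ]; exact hw.ne⟩
  rw [hi, measure_empty] at h
  exact h.congr happ

/-- On the dyadic annulus of radius `ρ` the weight `sg` is comparable to `ρ`. -/
lemma exists_mul_rpow_le_sg_rpow (e : ℝ) :
    ∃ K > (0 : ℝ), ∀ ρ : ℝ, 1 ≤ ρ → ∀ z : Eu n, ρ / 2 ≤ ‖z‖ → ‖z‖ ≤ 3 / 2 * ρ →
      K * ρ ^ e ≤ sg z ^ e := by
  refine ⟨min ((1 / 3) ^ e) (3 ^ e), by positivity, fun ρ hρ z h1 h2 => ?_⟩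
  have hρ0 : 0 < ρ := by linarith
  have hl : 1 / 3 * ρ ≤ sg z := Real.le_sqrt_of_sq_le (by nlinarith)
  have hu : sg z ≤ 3 * ρ := Real.sqrt_le_iff.2 ⟨by positivity, by nlinarith [norm_nonneg z]⟩
  rcases le_total 0 e with he | he
  · calc min ((1 / 3) ^ e) (3 ^ e) * ρ ^ e ≤ (1 / 3) ^ e * ρ ^ e := by
          gcongr; exact min_le_left _ _
      _ = (1 / 3 * ρ) ^ e := (Real.mul_rpow (by norm_num) hρ0.le).symm
      _ ≤ sg z ^ e := Real.rpow_le_rpow (by positivity) hl he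
  · calc min ((1 / 3) ^ e) (3 ^ e) * ρ ^ e ≤ 3 ^ e * ρ ^ e := by
          gcongr; exact min_le_right _ _
      _ = (3 * ρ) ^ e := (Real.mul_rpow (by norm_num) hρ0.le).symm
      _ ≤ sg z ^ e := Real.rpow_le_rpow_of_nonpos (by linarith) hu he

/-- The `L^q` norm on the ball `B(x, |x|/2)` is controlled by the weighted norm at infinity. -/
lemma exists_ball_Lq_le_weighted {G : Type*} [NormedAddCommGroup G] {q : ℝ} (hq : 0 < q) (e : ℝ)
    (h : Eu n → G) :
    ∃ K : ℝ, ∀ x : Eu n, 1 ≤ ‖x‖ →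
      (∫⁻ z in Metric.ball x (‖x‖ / 2), ‖h z‖ₑ ^ q) ^ (1 / q) * ENNReal.ofReal (‖x‖ ^ (e / q)) ≤
        ENNReal.ofReal K *
          (∫⁻ z in ext n (‖x‖ / 2), ENNReal.ofReal (‖h z‖ ^ q * sg z ^ e)) ^ (1 / q) := by
  obtain ⟨K, hK, hw⟩ := exists_mul_rpow_le_sg_rpow (n := n) e
  refine ⟨(K⁻¹) ^ (1 / q), fun x hx => ?_⟩
  have hx0 : 0 < ‖x‖ := by linarith
  have hz : ∀ z ∈ Metric.ball x (‖x‖ / 2), ‖x‖ / 2 < ‖z‖ ∧ ‖z‖ < 3 / 2 * ‖x‖ := by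
    intro z hz
    rw [mem_ball_iff_norm] at hz
    have h1 := norm_sub_norm_le z x
    have h2 := norm_sub_norm_le x z
    rw [norm_sub_rev] at h2
    constructor <;> linarith
  have hpt : ∀ z ∈ Metric.ball x (‖x‖ / 2), ‖h z‖ₑ ^ q * ENNReal.ofReal (‖x‖ ^ e) ≤
      ENNReal.ofReal K⁻¹ * ENNReal.ofReal (‖h z‖ ^ q * sg z ^ e) := by
    intro z hzb
    rw [← ofReal_norm, ENNReal.ofReal_rpow_of_nonneg (norm_nonneg _) hq.le,
      ← ENNReal.ofReal_mul (by positivity), ← ENNReal.ofReal_mul (by positivity)]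
    refine ENNReal.ofReal_le_ofReal ?_
    have := hw ‖x‖ hx z (hz z hzb).1.le (hz z hzb).2.le
    calc ‖h z‖ ^ q * ‖x‖ ^ e = K⁻¹ * (‖h z‖ ^ q * (K * ‖x‖ ^ e)) := by field_simp
      _ ≤ _ := by gcongr
  have hint : (∫⁻ z in Metric.ball x (‖x‖ / 2), ‖h z‖ₑ ^ q) * ENNReal.ofReal (‖x‖ ^ e) ≤
      ENNReal.ofReal K⁻¹ *
        ∫⁻ z in ext n (‖x‖ / 2), ENNReal.ofReal (‖h z‖ ^ q * sg z ^ e) := by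
    rw [← lintegral_mul_const' _ _ ENNReal.ofReal_ne_top,
      ← lintegral_const_mul' _ _ ENNReal.ofReal_ne_top]
    exact (setLIntegral_mono' measurableSet_ball hpt).trans
      (lintegral_mono_set fun z hzb => (hz z hzb).1)
  have hr := ENNReal.rpow_le_rpow hint (z := 1 / q) (by positivity)
  rw [ENNReal.mul_rpow_of_nonneg _ _ (by positivity),
    ENNReal.mul_rpow_of_nonneg _ _ (by positivity),
    ENNReal.ofReal_rpow_of_pos (by positivity), ENNReal.ofReal_rpow_of_pos (by positivity),
    ← Real.rpow_mul hx0.le, mul_one_div] at hr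
  exact hr

/-- The **weighted Sobolev embedding** `W^{1,q}_{-s} ↪ o(|x|^{-s})` for `q > n`. -/
lemma exists_norm_le_mul_rpow_neg {G : Type*} [NormedAddCommGroup G] [NormedSpace ℝ G]
    [CompleteSpace G] {q s R0 : ℝ} (hn : 1 ≤ n) (hq : (n : ℝ) < q) {f : Eu n → G}
    (hf : ContDiffOn ℝ 1 f (ext n R0))
    (hf0 : ∫⁻ x in ext n R0, ENNReal.ofReal (‖f x‖ ^ q * sg x ^ (s * q - n)) < ⊤)
    (hf1 : ∫⁻ x in ext n R0,
      ENNReal.ofReal (‖fderiv ℝ f x‖ ^ q * sg x ^ ((1 + s) * q - n)) < ⊤)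
    {ε : ℝ} (hε : 0 < ε) :
    ∃ R : ℝ, ∀ x : Eu n, R ≤ ‖x‖ → ‖f x‖ ≤ ε * ‖x‖ ^ (-s) := by
  have hn' : (1 : ℝ) ≤ n := by exact_mod_cast hn
  have hq1 : 1 < q := hn'.trans_lt hq
  have hq0 : 0 < q := one_pos.trans hq1
  obtain ⟨K0, hK0⟩ := exists_ball_Lq_le_weighted hq0 (s * q - n) f
  obtain ⟨K1, hK1⟩ := exists_ball_Lq_le_weighted hq0 ((1 + s) * q - n) (fderiv ℝ f)
  set T0 : ℝ → ℝ≥0∞ := fun ρ => ∫⁻ x in ext n ρ, ENNReal.ofReal (‖f x‖ ^ q * sg x ^ (s * q - n))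
  set T1 : ℝ → ℝ≥0∞ := fun ρ => ∫⁻ x in ext n ρ,
    ENNReal.ofReal (‖fderiv ℝ f x‖ ^ q * sg x ^ ((1 + s) * q - n))
  set C := ∫⁻ t in Set.Ioo (0 : ℝ) 1, ENNReal.ofReal (t ^ (-(Module.finrank ℝ (Eu n) : ℝ) / q))
  have hC : C ≠ ⊤ := by
    have hi : IntegrableOn (fun t : ℝ => t ^ (-(Module.finrank ℝ (Eu n) : ℝ) / q))
        (Set.Ioo 0 1) := by
      rw [intervalIntegral.integrableOn_Ioo_rpow_iff one_pos,
        finrank_euclideanSpace_fin, lt_div_iff₀ hq0]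
      linarith
    exact hi.lintegral_lt_top.ne
  set V := (ENNReal.ofReal ((1 / 2) ^ n) * volume (Metric.ball (0 : Eu n) 1)) ^ (1 / q)
  have hb0 : volume (Metric.ball (0 : Eu n) 1) ≠ 0 := (Metric.measure_ball_pos _ _ one_pos).ne'
  have hbt : volume (Metric.ball (0 : Eu n) 1) ≠ ⊤ := measure_ball_lt_top.ne
  have hV0 : V ≠ 0 := by
    refine (ENNReal.rpow_pos (pos_iff_ne_zero.2 (mul_ne_zero ?_ hb0))
      (ENNReal.mul_ne_top ENNReal.ofReal_ne_top hbt)).ne'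
    rw [Ne, ENNReal.ofReal_eq_zero, not_le]; positivity
  have hVt : V ≠ ⊤ := ENNReal.rpow_ne_top_of_nonneg (by positivity)
    (ENNReal.mul_ne_top ENNReal.ofReal_ne_top hbt)
  have hbound : ∀ x : Eu n, 1 ≤ ‖x‖ → R0 ≤ ‖x‖ / 2 →
      ‖f x‖ₑ * ENNReal.ofReal (‖x‖ ^ s) * V ≤
        ENNReal.ofReal K0 * T0 (‖x‖ / 2) ^ (1 / q) +
          C * (ENNReal.ofReal K1 * T1 (‖x‖ / 2) ^ (1 / q)) := by
    intro x hx hxR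
    have hx0 : 0 < ‖x‖ := by linarith
    have hsub : Metric.ball x (‖x‖ / 2) ⊆ ext n R0 := by
      intro z hz
      rw [mem_ball_iff_norm, norm_sub_rev] at hz
      have := norm_sub_norm_le x z
      change R0 < ‖z‖
      linarith
    have hm := morrey_center volume hq1 (by positivity : 0 < ‖x‖ / 2) (hf.mono hsub)
    have hvol : volume (Metric.ball x (‖x‖ / 2)) ^ (1 / q) =
        ENNReal.ofReal (‖x‖ ^ (n / q)) * V := by
      rw [Measure.addHaar_ball_of_pos _ _ (by positivity), finrank_euclideanSpace_fin,
        div_eq_mul_one_div ‖x‖ 2, mul_pow, ENNReal.ofReal_mul (by positivity), mul_assoc,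
        ENNReal.mul_rpow_of_nonneg _ _ (by positivity),
        ENNReal.ofReal_rpow_of_pos (by positivity), ← Real.rpow_natCast, ← Real.rpow_mul hx0.le,
        mul_one_div]
    have hpow : ENNReal.ofReal (‖x‖ ^ (n / q)) * ENNReal.ofReal (‖x‖ ^ ((s * q - n) / q)) =
        ENNReal.ofReal (‖x‖ ^ s) := by
      rw [← ENNReal.ofReal_mul (by positivity), ← Real.rpow_add hx0]
      congr 2; field_simp; ring
    have hpow1 : ENNReal.ofReal (‖x‖ / 2) * ENNReal.ofReal (‖x‖ ^ ((s * q - n) / q)) ≤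
        ENNReal.ofReal (‖x‖ ^ (((1 + s) * q - n) / q)) := by
      rw [← ENNReal.ofReal_mul (by positivity)]
      refine ENNReal.ofReal_le_ofReal ?_
      have : ((1 + s) * q - n) / q = 1 + (s * q - n) / q := by field_simp; ring
      rw [this, Real.rpow_add hx0, Real.rpow_one]
      gcongr
      linarith
    have h0 := hK0 x hx
    have h1 := hK1 x hx
    rw [hvol] at hm
    set P := ENNReal.ofReal (‖x‖ ^ ((s * q - n) / q))
    set A := (∫⁻ z in Metric.ball x (‖x‖ / 2), ‖f z‖ₑ ^ q) ^ (1 / q)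
    set D := (∫⁻ z in Metric.ball x (‖x‖ / 2), ‖fderiv ℝ f z‖ₑ ^ q) ^ (1 / q)
    calc ‖f x‖ₑ * ENNReal.ofReal (‖x‖ ^ s) * V
        = (‖f x‖ₑ * (ENNReal.ofReal (‖x‖ ^ (n / q)) * V)) * P := by rw [← hpow]; ring
      _ ≤ (A + ENNReal.ofReal (‖x‖ / 2) * C * D) * P := by gcongr
      _ = A * P + C * (D * (ENNReal.ofReal (‖x‖ / 2) * P)) := by ring
      _ ≤ A * P + C * (D * ENNReal.ofReal (‖x‖ ^ (((1 + s) * q - n) / q))) := by gcongr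
      _ ≤ _ := by gcongr
  have hhalf : Filter.Tendsto (fun ρ : ℝ => ρ / 2) Filter.atTop Filter.atTop :=
    Filter.tendsto_id.atTop_div_const two_pos
  have hT : ∀ T : ℝ → ℝ≥0∞, Filter.Tendsto T Filter.atTop (nhds 0) → ∀ K : ℝ,
      Filter.Tendsto (fun ρ => ENNReal.ofReal K * T (ρ / 2) ^ (1 / q)) Filter.atTop (nhds 0) := by
    intro T hT K
    have h1 := ((hT.comp hhalf).ennrpow_const (1 / q))
    rw [ENNReal.zero_rpow_of_pos (by positivity)] at h1
    simpa using ENNReal.Tendsto.const_mul h1 (Or.inr (ENNReal.ofReal_ne_top (r := K)))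
  have hlim : Filter.Tendsto (fun ρ => ENNReal.ofReal K0 * T0 (ρ / 2) ^ (1 / q) +
      C * (ENNReal.ofReal K1 * T1 (ρ / 2) ^ (1 / q))) Filter.atTop (nhds 0) := by
    simpa using (hT T0 (tendsto_setLIntegral_ext_atTop hf0) K0).add
      (ENNReal.Tendsto.const_mul (hT T1 (tendsto_setLIntegral_ext_atTop hf1) K1) (Or.inr hC))
  have hpos : 0 < ENNReal.ofReal ε * V :=
    pos_iff_ne_zero.2 (mul_ne_zero (by simpa using hε) hV0)
  obtain ⟨R, hR⟩ := Filter.eventually_atTop.1 ((hlim.eventually_lt_const hpos).and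
    ((Filter.eventually_ge_atTop 1).and (hhalf.eventually_ge_atTop R0)))
  refine ⟨R, fun x hx => ?_⟩
  obtain ⟨h1, h2, h3⟩ := hR ‖x‖ hx
  have h4 := (hbound x h2 h3).trans h1.le
  rw [ENNReal.mul_le_mul_iff_left hV0 hVt, ← ofReal_norm, ← ENNReal.ofReal_mul (norm_nonneg _),
    ENNReal.ofReal_le_ofReal_iff hε.le] at h4
  rw [Real.rpow_neg (norm_nonneg _), ← div_eq_mul_inv, le_div_iff₀ (by positivity)]
  exact h4

end Decay

/-- If `dv` tends to zero at infinity, then `v` is Lipschitz with arbitrarily small constant near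
infinity. -/
lemma exists_lipschitzOnWith_of_fderiv_tendsto_zero {E F : Type*} [NormedAddCommGroup E]
    [NormedSpace ℝ E] [ProperSpace E] [NormedAddCommGroup F] [NormedSpace ℝ F] {v : E → F} {R0 : ℝ}
    (hv : ∀ x, R0 < ‖x‖ → DifferentiableAt ℝ v x)
    (hdv : ∀ η > (0 : ℝ), ∃ R, ∀ x, R ≤ ‖x‖ → ‖fderiv ℝ v x‖ ≤ η)
    {ε : NNReal} (hε : 0 < ε) :
    ∃ R > R0, LipschitzOnWith ε v {x | R ≤ ‖x‖} := by
  have hε' : (0 : ℝ) < ε := hε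
  obtain ⟨Rd, hRd⟩ := hdv (ε / 8) (by positivity)
  obtain ⟨R1, hR1⟩ : ∃ R1 : ℝ, R1 = max (max Rd (R0 + 1)) 1 := ⟨_, rfl⟩
  have hR1d : Rd ≤ R1 := hR1 ▸ (le_max_left _ _).trans (le_max_left _ _)
  have hR10 : R0 < R1 := by
    have : R0 + 1 ≤ R1 := hR1 ▸ (le_max_right _ _).trans (le_max_left _ _)
    linarith
  have hR1p : 1 ≤ R1 := hR1 ▸ le_max_right _ _
  have hseg : ∀ x z : E, (∀ w ∈ segment ℝ x z, R1 ≤ ‖w‖) → ‖v z - v x‖ ≤ ε / 8 * ‖z - x‖ :=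
    fun x z h => (convex_segment x z).norm_image_sub_le_of_norm_fderiv_le
      (fun w hw => hv w (hR10.trans_le (h w hw))) (fun w hw => hRd w (hR1d.trans (h w hw)))
      (left_mem_segment ℝ x z) (right_mem_segment ℝ x z)
  obtain ⟨M, hM⟩ := (isCompact_sphere (0 : E) R1).exists_bound_of_continuousOn (f := v)
    fun x hx =>
      (hv x (by rw [mem_sphere_zero_iff_norm.1 hx]; exact hR10)).continuousAt.continuousWithinAt
  have hgrow : ∀ x : E, R1 ≤ ‖x‖ → ‖v x‖ ≤ M + ε / 8 * ‖x‖ := by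
    intro x hx
    have hx0 : 0 < ‖x‖ := by linarith
    have hle : R1 / ‖x‖ ≤ 1 := (div_le_one hx0).2 hx
    have hp : ‖(R1 / ‖x‖) • x‖ = R1 := by
      rw [norm_smul, Real.norm_of_nonneg (by positivity)]; field_simp
    have h1 := hseg ((R1 / ‖x‖) • x) x (by
      rintro w ⟨a, b, ha, hb, hab, rfl⟩
      have : a • (R1 / ‖x‖) • x + b • x = (a * (R1 / ‖x‖) + b) • x := by
        rw [smul_smul, add_smul]
      rw [this, norm_smul, Real.norm_of_nonneg (by positivity), add_mul, mul_assoc,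
        div_mul_cancel₀ _ hx0.ne']
      have : b * R1 ≤ b * ‖x‖ := by gcongr
      have : a * R1 + b * R1 = R1 := by rw [← add_mul, hab, one_mul]
      linarith)
    have h2 : ‖x - (R1 / ‖x‖) • x‖ ≤ ‖x‖ := by
      have : x - (R1 / ‖x‖) • x = (1 - R1 / ‖x‖) • x := by rw [sub_smul, one_smul]
      rw [this, norm_smul, Real.norm_of_nonneg (by linarith)]
      have : 0 ≤ R1 / ‖x‖ * ‖x‖ := by positivity
      linarith
    have h3 := hM ((R1 / ‖x‖) • x) (by simpa using hp)
    have h4 : ε / 8 * ‖x - (R1 / ‖x‖) • x‖ ≤ ε / 8 * ‖x‖ := by gcongr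
    have h5 := norm_sub_norm_le (v x) (v ((R1 / ‖x‖) • x))
    linarith
  obtain ⟨R, hR⟩ : ∃ R : ℝ, R = max (2 * R1) (8 * M / ε) := ⟨_, rfl⟩
  have hRR1 : 2 * R1 ≤ R := hR ▸ le_max_left _ _
  have hRM : 8 * M ≤ ε * R := by
    rw [← div_le_iff₀' hε']; exact hR ▸ le_max_right _ _
  have hlin : ∀ x : E, R ≤ ‖x‖ → ‖v x‖ ≤ ε / 4 * ‖x‖ := by
    intro x hx
    have h1 := hgrow x (by linarith)
    have : ε * R ≤ ε * ‖x‖ := by gcongr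
    linarith
  refine ⟨R, by linarith, LipschitzOnWith.of_dist_le_mul fun x hx z hz => ?_⟩
  replace hx : R ≤ ‖x‖ := hx
  replace hz : R ≤ ‖z‖ := hz
  rw [dist_eq_norm, dist_eq_norm]
  by_cases hs : ∀ w ∈ segment ℝ z x, R1 ≤ ‖w‖
  · have : 0 ≤ ε * ‖x - z‖ := by positivity
    linarith [hseg z x hs]
  · push Not at hs
    obtain ⟨w, hw, hwR⟩ := hs
    have h1 := dist_add_dist_of_mem_segment hw
    rw [dist_eq_norm, dist_eq_norm, dist_eq_norm, norm_sub_rev z x] at h1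
    have h2 := norm_sub_norm_le z w
    have h3 := norm_sub_norm_le x w
    rw [norm_sub_rev] at h3
    have h4 : ε / 4 * (‖x‖ + ‖z‖) ≤ ε / 4 * (4 * ‖x - z‖) := by gcongr; linarith
    linarith [norm_sub_le (v x) (v z), hlin x hx, hlin z hz]

/-- A perturbation of the identity by a strict contraction is bijective. -/
lemma bijective_id_sub_of_lipschitzWith {E : Type*} [NormedAddCommGroup E] [CompleteSpace E]
    {K : NNReal} (hK : K < 1) {w : E → E} (hw : LipschitzWith K w) :
    Function.Bijective fun x => x - w x := by
  constructor
  · intro x z hxz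
    have h1 : x - z = w x - w z := by
      have : x - w x = z - w z := hxz
      rw [sub_eq_sub_iff_add_eq_add] at this ⊢
      rw [this, add_comm]
    have h2 := hw.dist_le_mul x z
    rw [dist_eq_norm, dist_eq_norm, ← h1] at h2
    have hK' : (K : ℝ) < 1 := hK
    have : ‖x - z‖ ≤ 0 := by nlinarith [norm_nonneg (x - z)]
    exact sub_eq_zero.1 (norm_le_zero_iff.1 this)
  · intro y
    have hc : ContractingWith K fun x => y + w x :=
      ⟨hK, LipschitzWith.of_dist_le_mul fun x z => by simpa using hw.dist_le_mul x z⟩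
    obtain ⟨x, hx, -⟩ := hc.exists_fixedPoint 0 (edist_ne_top _ _)
    exact ⟨x, by rw [sub_eq_iff_eq_add]; exact hx.symm⟩

/-- A map of the form `x - v x` with `v` sufficiently contracting near infinity is a bijection
between a neighbourhood of infinity and the exterior of a ball. -/
lemma exists_bijOn_ext_of_lipschitzOnWith {n : ℕ} {v : Eu n → Eu n} {R0 R : ℝ} (hR0 : 0 < R0)
    (hR : R0 < R)
    (hv : LipschitzOnWith ((lipschitzExtensionConstant (Eu n))⁻¹ * (1 / 2)) v {x | R ≤ ‖x‖}) :
    ∃ (U : Set (Eu n)) (R1 R2 C : ℝ), 0 < R2 ∧ 0 < C ∧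
      U ⊆ ext n R0 ∧ ext n R1 ⊆ U ∧ IsOpen U ∧
      Set.BijOn (fun z : Eu n => z - v z) U (ext n R2) ∧
      ∀ x ∈ U, C⁻¹ * ‖x‖ ≤ ‖x - v x‖ ∧ ‖x - v x‖ ≤ C * ‖x‖ := by
  obtain ⟨w, hw, hvw⟩ := hv.extend_finite_dimension
  rw [mul_inv_cancel_left₀ (lipschitzExtensionConstant_pos (Eu n)).ne'] at hw
  have hbij := bijective_id_sub_of_lipschitzWith (by norm_num : (1 / 2 : NNReal) < 1) hw
  have hc0 := norm_nonneg (w 0)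
  have hgrow : ∀ x, ‖w x‖ ≤ ‖w 0‖ + ‖x‖ / 2 := by
    intro x
    have h1 := hw.dist_le_mul x 0
    rw [dist_eq_norm, dist_zero_right] at h1
    have h2 := norm_sub_norm_le (w x) (w 0)
    push_cast at h1
    linarith
  obtain ⟨r, hr⟩ : ∃ r : ℝ, r = max R (4 * ‖w 0‖) := ⟨_, rfl⟩
  have hrR : R ≤ r := hr ▸ le_max_left _ _
  have hrw : 4 * ‖w 0‖ ≤ r := hr ▸ le_max_right _ _
  have hlow : ∀ x, 4 * ‖w 0‖ ≤ ‖x‖ → 1 / 4 * ‖x‖ ≤ ‖x - w x‖ := by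
    intro x hx
    linarith [hgrow x, norm_sub_norm_le x (w x)]
  set Y : Eu n → Eu n := fun x => x - w x
  set R2 := 3 / 2 * r + ‖w 0‖ with hR2
  have hYcont : Continuous Y := continuous_id.sub hw.continuous
  have hU : ∀ x ∈ Y ⁻¹' ext n R2, r < ‖x‖ := by
    intro x hx
    have h1 : R2 < ‖x - w x‖ := hx
    linarith [norm_sub_le x (w x), hgrow x]
  have hYv : ∀ x ∈ Y ⁻¹' ext n R2, x - v x = Y x := fun x hx => by
    rw [hvw (show R ≤ ‖x‖ from hrR.trans (hU x hx).le)]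
  refine ⟨Y ⁻¹' ext n R2, 4 * R2, R2, 4, by linarith, by norm_num, fun x hx => ?_, fun x hx => ?_,
    (isOpen_ext R2).preimage hYcont, ?_, fun x hx => ?_⟩
  · exact (hR.trans_le hrR).trans (hU x hx)
  · have hx' : 4 * R2 < ‖x‖ := hx
    change R2 < ‖x - w x‖
    linarith [hlow x (by linarith)]
  · refine Set.BijOn.congr ?_ fun x hx => (hYv x hx).symm
    exact ⟨Set.mapsTo_preimage _ _, hbij.1.injOn, (Set.image_preimage_eq _ hbij.2).ge⟩
  · have hx' := hU x hx
    rw [hYv x hx]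
    have h1 := hlow x (by linarith)
    have h2 : ‖Y x‖ ≤ ‖x‖ + ‖w x‖ := norm_sub_le x (w x)
    exact ⟨by norm_num at h1 ⊢; exact h1, by linarith [hgrow x]⟩

/-- The operator norm of a map into `ℝⁿ` is bounded through its components. -/
lemma norm_fderiv_le_of_components {n : ℕ} {v : Eu n → Eu n} {x : Eu n} {η : ℝ} (hη : 0 ≤ η)
    (hd : ∀ i, DifferentiableAt ℝ (fun z => v z i) x)
    (h : ∀ i, ‖fderiv ℝ (fun z => v z i) x‖ ≤ η) : ‖fderiv ℝ v x‖ ≤ n * η := by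
  refine ContinuousLinearMap.opNorm_le_bound _ (by positivity) fun y => ?_
  have hcomp : ∀ i, ‖fderiv ℝ v x y i‖ ≤ η * ‖y‖ := by
    intro i
    have h1 : HasFDerivAt (fun z => v z i) (EuclideanSpace.proj i ∘L fderiv ℝ v x) x :=
      (EuclideanSpace.proj (𝕜 := ℝ) i).hasFDerivAt.comp x
        (differentiableAt_euclidean.2 hd).hasFDerivAt
    have h2 := (fderiv ℝ (fun z => v z i) x).le_of_opNorm_le (h i) y
    rwa [h1.fderiv] at h2
  have hsum : ∑ i, ‖fderiv ℝ v x y i‖ ^ 2 ≤ n * (η * ‖y‖) ^ 2 := by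
    calc ∑ i, ‖fderiv ℝ v x y i‖ ^ 2 ≤ ∑ _i : Fin n, (η * ‖y‖) ^ 2 :=
          Finset.sum_le_sum fun i _ => pow_le_pow_left₀ (norm_nonneg _) (hcomp i) 2
      _ = _ := by simp
  have hnn : (n : ℝ) ≤ (n : ℝ) ^ 2 := by exact_mod_cast Nat.le_self_pow two_ne_zero n
  rw [EuclideanSpace.norm_eq, Real.sqrt_le_iff]
  refine ⟨by positivity, hsum.trans ?_⟩
  calc (n : ℝ) * (η * ‖y‖) ^ 2 ≤ (n : ℝ) ^ 2 * (η * ‖y‖) ^ 2 := by gcongr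
    _ = _ := by ring

/-- The differential of a function in `W^{2,q}_{1-s}`, `q > n`, is `o(|x|^{-s})`. -/
lemma exists_norm_fderiv_le_of_memW {n : ℕ} {q s R0 : ℝ} (hn : 1 ≤ n) (hq : (n : ℝ) < q)
    {u : Eu n → ℝ} (hu : memW n 2 q (1 - s) R0 u) {ε : ℝ} (hε : 0 < ε) :
    ∃ R : ℝ, ∀ x : Eu n, R ≤ ‖x‖ → ‖fderiv ℝ u x‖ ≤ ε * ‖x‖ ^ (-s) := by
  have hq0 : 0 < q := (Nat.cast_nonneg n).trans_lt hq
  have hO := isOpen_ext (n := n) R0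
  obtain ⟨hC, hW⟩ := hu
  have hfin : ∀ j ∈ Finset.range 3, ∫⁻ x in ext n R0,
      ENNReal.ofReal (‖iteratedFDerivWithin ℝ j u (ext n R0) x‖ ^ q
        * sg x ^ (((j : ℝ) - (1 - s)) * q - n)) < ⊤ := fun j hj => by
    have := (ENNReal.sum_lt_top.1 hW) j hj
    exact (ENNReal.rpow_lt_top_iff_of_pos (by positivity)).1 this
  have hfd : Set.EqOn (fderivWithin ℝ u (ext n R0)) (fderiv ℝ u) (ext n R0) := fun x hx =>
    fderivWithin_of_isOpen hO hx
  refine exists_norm_le_mul_rpow_neg hn hq (hC.fderiv_of_isOpen hO (m := 1) (by norm_num)) ?_ ?_ hε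
  · convert hfin 1 (by simp) using 1
    refine setLIntegral_congr_fun hO.measurableSet fun x hx => ?_
    have h1 : ‖fderiv ℝ u x‖ = ‖iteratedFDerivWithin ℝ 1 u (ext n R0) x‖ := by
      rw [norm_iteratedFDerivWithin_one _ (hO.uniqueDiffWithinAt hx), hfd hx]
    simp only [h1]
    congr 4
    push_cast; ring
  · convert hfin 2 (by simp) using 1
    refine setLIntegral_congr_fun hO.measurableSet fun x hx => ?_
    have h2 : ‖fderiv ℝ (fderiv ℝ u) x‖ = ‖iteratedFDerivWithin ℝ 2 u (ext n R0) x‖ := by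
      rw [← norm_iteratedFDerivWithin_fderivWithin hO.uniqueDiffOn hx,
        norm_iteratedFDerivWithin_one _ (hO.uniqueDiffWithinAt hx), fderivWithin_congr hfd (hfd hx),
        fderivWithin_of_isOpen hO hx]
    simp only [h2]
    congr 4
    push_cast; ring

/-- harmonic coordinates near infinity.  For an AE metric g of class
W^{k,q}_{−τ}, q > n, with τ* = min{τ, n−2}, and v ∈ W^{2,q}_{1−τ*} solving
Δ_g vⁱ = Γⁱ (Γⁱ = gᵏˡΓⁱ_{kl} ∈ W^{k−1,q}_{−1−τ}), the map y = x − v(x) satisfies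
dy = Id + o(|x|^{−τ*}) pointwise; in particular y defines a diffeomorphism from a
neighbourhood of infinity onto the exterior of a ball, with C⁻¹|x| ≤ |y(x)| ≤ C|x|. -/
theorem harmonic_coordinates_at_infinity (n k : ℕ) (q τ R0 : ℝ)
    (hn : 3 ≤ n) (hk : 1 ≤ k) (hq : (n:ℝ) < q) (hτ : 0 < τ) (hR0 : 0 < R0)
    (g : Eu n → Matrix (Fin n) (Fin n) ℝ)
    (hsym : ∀ x, (g x).IsSymm)
    (hpos : ∀ x ∈ ext n R0, (g x).PosDef)
    (hdet : ∃ ε > (0:ℝ), ∀ x ∈ ext n R0, ε ≤ (g x).det)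
    (hAE : ∀ i j, memW n k q (-τ) R0
      (fun x => g x i j - (1 : Matrix (Fin n) (Fin n) ℝ) i j))
    (hΓ : ∀ i, memW n (k-1) q (-1 - τ) R0 (gam g (fun y => (g y)⁻¹) i))
    (v : Eu n → Eu n)
    (hv : ∀ i, memW n 2 q (1 - min τ ((n:ℝ) - 2)) R0 (fun x => v x i))
    (heq : ∀ (i : Fin n), ∀ x ∈ ext n R0,
      lapB g (fun y => (g y)⁻¹) (fun y => v y i) x = gam g (fun y => (g y)⁻¹) i x) :
    (∀ ε > (0:ℝ), ∃ R ≥ R0, ∀ x : Eu n, R ≤ ‖x‖ →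
      ‖fderiv ℝ (fun z : Eu n => z - v z) x - ContinuousLinearMap.id ℝ (Eu n)‖
        ≤ ε * ‖x‖ ^ (-(min τ ((n:ℝ) - 2)))) ∧
    ∃ (U : Set (Eu n)) (R1 R2 C : ℝ), 0 < R2 ∧ 0 < C ∧
      U ⊆ ext n R0 ∧ ext n R1 ⊆ U ∧ IsOpen U ∧
      Set.BijOn (fun z : Eu n => z - v z) U (ext n R2) ∧
      ∀ x ∈ U, C⁻¹ * ‖x‖ ≤ ‖x - v x‖ ∧ ‖x - v x‖ ≤ C * ‖x‖ := by
  set s := min τ ((n : ℝ) - 2)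
  have hn3 : (3 : ℝ) ≤ n := by exact_mod_cast hn
  have hs : 0 < s := lt_min hτ (by linarith)
  have hd : ∀ x, R0 < ‖x‖ → ∀ i, DifferentiableAt ℝ (fun z => v z i) x := fun x hx i =>
    ((hv i).1.contDiffAt ((isOpen_ext R0).mem_nhds hx)).differentiableAt two_ne_zero
  have hdecay : ∀ ε > (0 : ℝ), ∃ R > R0, ∀ x : Eu n, R ≤ ‖x‖ →
      ‖fderiv ℝ v x‖ ≤ ε * ‖x‖ ^ (-s) := by
    intro ε hε
    choose R hR using fun i =>
      exists_norm_fderiv_le_of_memW (by lia) hq (hv i) (div_pos hε (by linarith : (0 : ℝ) < n))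
    obtain ⟨R', hR'⟩ := (Set.finite_range R).bddAbove
    refine ⟨max R' (R0 + 1), by simp, fun x hx => ?_⟩
    have hxR0 : R0 < ‖x‖ := by linarith [(le_max_right R' (R0 + 1)).trans hx]
    have h := norm_fderiv_le_of_components (by positivity) (hd x hxR0) fun i =>
      hR i x ((hR' ⟨i, rfl⟩).trans ((le_max_left _ _).trans hx))
    calc ‖fderiv ℝ v x‖ ≤ n * (ε / n * ‖x‖ ^ (-s)) := h
      _ = ε * ‖x‖ ^ (-s) := by field_simp
  have hdiff : ∀ x, R0 < ‖x‖ → DifferentiableAt ℝ v x := fun x hx =>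
    differentiableAt_euclidean.2 (hd x hx)
  constructor
  · intro ε hε
    obtain ⟨R, hRR0, hR⟩ := hdecay ε hε
    refine ⟨R, hRR0.le, fun x hx => ?_⟩
    have h1 : HasFDerivAt (fun z => z - v z) (ContinuousLinearMap.id ℝ (Eu n) - fderiv ℝ v x) x :=
      (hasFDerivAt_id x).sub (hdiff x (hRR0.trans_le hx)).hasFDerivAt
    rw [h1.fderiv, sub_sub_cancel_left, norm_neg]
    exact hR x hx
  · have hlim : ∀ η > (0 : ℝ), ∃ R, ∀ x, R ≤ ‖x‖ → ‖fderiv ℝ v x‖ ≤ η := by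
      intro η hη
      obtain ⟨R, -, hR⟩ := hdecay η hη
      refine ⟨max R 1, fun x hx => (hR x ((le_max_left _ _).trans hx)).trans ?_⟩
      exact mul_le_of_le_one_right hη.le
        (Real.rpow_le_one_of_one_le_of_nonpos ((le_max_right _ _).trans hx) (by linarith))
    obtain ⟨R, hR, hL⟩ := exists_lipschitzOnWith_of_fderiv_tendsto_zero hdiff hlim
      (ε := (lipschitzExtensionConstant (Eu n))⁻¹ * (1 / 2))
      (mul_pos (inv_pos.2 (lipschitzExtensionConstant_pos _)) (by norm_num))
    exact exists_bijOn_ext_of_lipschitzOnWith hR0 hR hL
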